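/- Let m be a positive integer, let λ be a partition of n, and let b = ⌊n/m⌋. For 1 ≤ i ≤ b let P_i be the set of compositions (μ_1,...,μ_{ℓ(λ)}) of type λ such that μ_1 + ··· + μ_r = mi for some 1 ≤ r ≤ ℓ(λ), and for 1 ≤ j ≤ b let W_j(λ) = {A ∈ W(λ) : len(A) = j+1}. Then for each 1 ≤ j ≤ b: ∑_{1 ≤ i_1 < ··· < i_j ≤ b} |P_{i_1} ∩ ··· ∩ P_{i_j}| = ∑_{A ∈ W_j(λ)} c_A. -/

import Mathlib

noncomputable section

/-- A partition: a weakly decreasing finite sequence of positive integers. -/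
def IsPartitionL (l : List ℕ) : Prop := l.Pairwise (· ≥ ·) ∧ ∀ x ∈ l, 0 < x

/-- `c_λ`: the number of compositions of type `λ` (distinct rearrangements of `λ`). -/
def numComp (l : List ℕ) : ℕ := l.permutations.dedup.length

/-- `c_λ^(m)`: the number of compositions of type `λ` all of whose partial sums are
not divisible by `m`. -/
def numCompM (m : ℕ) (l : List ℕ) : ℕ :=
  (l.permutations.dedup.filter fun δ => decide (∀ j < δ.length, ¬ m ∣ (δ.take (j + 1)).sum)).length

/-- Membership of `A = (δ^(1), …, δ^(r), ξ)` in `W(λ)`: a nonempty finite sequence of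
partitions whose parts taken together rearrange to `λ`, and all terms except possibly the
last one are nonempty with size divisible by `m`.  Here `len(A) = A.length = r + 1`. -/
def Wmem (m : ℕ) (lam : List ℕ) (A : List (List ℕ)) : Prop :=
  A ≠ [] ∧ (∀ l ∈ A, IsPartitionL l) ∧ (∀ l ∈ A.dropLast, l ≠ [] ∧ m ∣ l.sum) ∧
  List.Perm A.flatten lam

/-- `c_A = c_{δ^(1)} ⋯ c_{δ^(r)} ⋅ c_ξ`. -/
def cAprod (A : List (List ℕ)) : ℕ := (A.map numComp).prod

def cutsF (m : ℕ) : ℕ → List (List ℕ) → Finset ℕ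
  | _, [] => ∅
  | _, [_] => ∅
  | s, b :: c :: B => insert (s + b.sum / m) (cutsF m (s + b.sum / m) (c :: B))

def GoodB (m : ℕ) : List (List ℕ) → Prop
  | [] => True
  | [_] => True
  | b :: c :: B => (b ≠ [] ∧ m ∣ b.sum) ∧ GoodB m (c :: B)

theorem goodB_iff (m : ℕ) (B : List (List ℕ)) :
    GoodB m B ↔ ∀ l ∈ B.dropLast, l ≠ [] ∧ m ∣ l.sum := by
  induction B with
  | nil => simp [GoodB]
  | cons b B ih =>
    cases B with
    | nil => simp [GoodB]
    | cons c B => simp only [GoodB, ih, List.dropLast_cons₂, List.forall_mem_cons]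

theorem sum_pos_of {l : List ℕ} (h : l ≠ []) (hp : ∀ x ∈ l, 0 < x) : 0 < l.sum :=
  List.sum_pos l hp h

theorem div_facts {m : ℕ} (hm : 0 < m) {b : List ℕ} (h : b ≠ []) (hd : m ∣ b.sum)
    (hp : ∀ x ∈ b, 0 < x) : 0 < b.sum / m ∧ m * (b.sum / m) = b.sum :=
  ⟨Nat.div_pos (Nat.le_of_dvd (sum_pos_of h hp) hd) hm, Nat.mul_div_cancel' hd⟩

theorem cuts_gt {m : ℕ} (hm : 0 < m) (B : List (List ℕ)) : ∀ s, GoodB m B →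
    (∀ x ∈ B.flatten, 0 < x) → ∀ i ∈ cutsF m s B, s < i := by
  induction B with
  | nil => simp [cutsF]
  | cons b B ih =>
    cases B with
    | nil => simp [cutsF]
    | cons c B =>
      intro s hg hp i hi
      have hb := div_facts hm hg.1.1 hg.1.2 (fun x hx => hp x (by simp [hx]))
      rw [cutsF, Finset.mem_insert] at hi
      rcases hi with rfl | hi
      · omega
      · have := ih _ hg.2 (fun x hx => hp x (by rw [List.flatten_cons]; simp only [List.mem_append]; exact Or.inr hx)) i hi
        omega

theorem cuts_card {m : ℕ} (hm : 0 < m) (B : List (List ℕ)) : ∀ s, GoodB m B → B ≠ [] →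
    (∀ x ∈ B.flatten, 0 < x) → (cutsF m s B).card + 1 = B.length := by
  induction B with
  | nil => simp
  | cons b B ih =>
    cases B with
    | nil => simp [cutsF]
    | cons c B =>
      intro s hg _ hp
      have hp' : ∀ x ∈ (c :: B).flatten, 0 < x :=
        fun x hx => hp x (by rw [List.flatten_cons]; simp only [List.mem_append]; exact Or.inr hx)
      rw [cutsF, Finset.card_insert_of_notMem, ih _ hg.2 (by simp) hp']
      · simp
      · intro h
        exact absurd (cuts_gt hm _ _ hg.2 hp' _ h) (lt_irrefl _)

theorem cuts_ps {m : ℕ} (hm : 0 < m) (B : List (List ℕ)) : ∀ s, GoodB m B →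
    (∀ x ∈ B.flatten, 0 < x) → ∀ i ∈ cutsF m s B, ∃ k, i = s + k ∧
      ∃ r, 1 ≤ r ∧ r ≤ B.flatten.length ∧ (B.flatten.take r).sum = m * k := by
  induction B with
  | nil => simp [cutsF]
  | cons b B ih =>
    cases B with
    | nil => simp [cutsF]
    | cons c B =>
      intro s hg hp i hi
      have hp' : ∀ x ∈ (c :: B).flatten, 0 < x :=
        fun x hx => hp x (by rw [List.flatten_cons]; simp only [List.mem_append]; exact Or.inr hx)
      have hb := div_facts hm hg.1.1 hg.1.2 (fun x hx => hp x (by simp [hx]))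
      have hbl := List.length_pos_of_ne_nil hg.1.1
      rw [List.flatten_cons]
      rw [cutsF, Finset.mem_insert] at hi
      rcases hi with rfl | hi
      · refine ⟨_, rfl, b.length, hbl, ?_, ?_⟩
        · rw [List.length_append]; omega
        · rw [List.take_left, hb.2]
      · obtain ⟨k, rfl, r, h1, h2, h3⟩ := ih _ hg.2 hp' i hi
        refine ⟨b.sum / m + k, by omega, b.length + r, by omega, ?_, ?_⟩
        · rw [List.length_append]; omega
        · rw [List.take_length_add_append, List.sum_append, h3, mul_add, hb.2]

theorem prefix_eq {a b c d : List ℕ} (h : a ++ b = c ++ d) (hs : a.sum = c.sum)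
    (hp : ∀ x ∈ a ++ b, 0 < x) : a = c := by
  induction a generalizing c with
  | nil =>
    by_contra hc
    have := sum_pos_of (Ne.symm hc) (fun x hx => hp x (by rw [h]; simp [hx]))
    simp at hs; omega
  | cons x a ih =>
    cases c with
    | nil =>
      have := hp x (by simp)
      simp at hs; omega
    | cons y c =>
      simp only [List.cons_append, List.cons.injEq] at h
      obtain ⟨rfl, h⟩ := h
      rw [ih h (by simpa using hs) (fun z hz => hp z (by simp at hz ⊢; tauto))]

theorem cuts_inj {m : ℕ} (hm : 0 < m) (B : List (List ℕ)) : ∀ s (B' : List (List ℕ)),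
    GoodB m B → GoodB m B' → B.length = B'.length →
    (∀ x ∈ B.flatten, 0 < x) → B.flatten = B'.flatten → cutsF m s B = cutsF m s B' → B = B' := by
  induction B with
  | nil =>
    intro s B1 _ _ hl _ _ _
    exact (List.length_eq_zero_iff.1 hl.symm).symm
  | cons b B ih =>
    intro s B' hg hg' hl hp hf hc
    match B, B', hl with
    | [], [b'], _ => simpa using hf
    | c :: B, b' :: c' :: B', hl =>
      have hpf : ∀ x ∈ b' ++ (c' :: B').flatten, 0 < x := by
        rw [hf] at hp; exact hp
      have hp1 : ∀ x ∈ (c :: B).flatten, 0 < x :=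
        fun x hx => hp x (by rw [List.flatten_cons]; simp only [List.mem_append]; exact Or.inr hx)
      have hp2 : ∀ x ∈ (c' :: B').flatten, 0 < x :=
        fun x hx => hpf x (by simp only [List.mem_append]; exact Or.inr hx)
      have hb := div_facts hm hg.1.1 hg.1.2 (fun x hx => hp x (by simp [hx]))
      have hb' := div_facts hm hg'.1.1 hg'.1.2 (fun x hx => hpf x (by simp [hx]))
      have g1 := cuts_gt hm _ (s + b.sum / m) hg.2 hp1
      have g2 := cuts_gt hm _ (s + b'.sum / m) hg'.2 hp2
      rw [cutsF, cutsF] at hc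
      have e : b.sum / m = b'.sum / m := by
        have h1 : s + b.sum / m ∈ insert (s + b'.sum / m) (cutsF m (s + b'.sum / m) (c' :: B')) := by
          rw [← hc]; simp
        have h2 : s + b'.sum / m ∈ insert (s + b.sum / m) (cutsF m (s + b.sum / m) (c :: B)) := by
          rw [hc]; simp
        rw [Finset.mem_insert] at h1 h2
        rcases h1 with h1 | h1
        · omega
        rcases h2 with h2 | h2
        · omega
        have := g2 _ h1
        have := g1 _ h2
        omega
      have hbb : b = b' := by
        refine prefix_eq (b := (c :: B).flatten) (d := (c' :: B').flatten) hf ?_ hp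
        rw [← hb.2, ← hb'.2, e]
      subst hbb
      have hf' : (c :: B).flatten = (c' :: B').flatten :=
        List.append_cancel_left (as := b) hf
      have hc' : cutsF m (s + b.sum / m) (c :: B) = cutsF m (s + b.sum / m) (c' :: B') := by
        have n1 : s + b.sum / m ∉ cutsF m (s + b.sum / m) (c :: B) := fun h => lt_irrefl _ (g1 _ h)
        have n2 : s + b.sum / m ∉ cutsF m (s + b.sum / m) (c' :: B') := fun h => lt_irrefl _ (g2 _ h)
        rw [← Finset.erase_insert n1, ← Finset.erase_insert n2, hc]
      rw [ih _ _ hg.2 hg'.2 (by simpa using hl) hp1 hf' hc']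

theorem cuts_surj {m : ℕ} (hm : 0 < m) (j : ℕ) : ∀ s (T : Finset ℕ) (μ : List ℕ), T.card = j →
    (∀ x ∈ μ, 0 < x) →
    (∀ i ∈ T, ∃ k, i = s + k ∧ ∃ r, 1 ≤ r ∧ r ≤ μ.length ∧ (μ.take r).sum = m * k) →
    ∃ B : List (List ℕ), GoodB m B ∧ B.length = j + 1 ∧ B.flatten = μ ∧ cutsF m s B = T := by
  induction j with
  | zero =>
    intro s T μ hT _ _
    rw [Finset.card_eq_zero] at hT
    exact ⟨[μ], by simp [GoodB], by simp, by simp, by simp [cutsF, hT]⟩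
  | succ j ih =>
    intro s T μ hT hp h
    have hne : T.Nonempty := by rw [← Finset.card_pos]; omega
    set t := T.min' hne with ht
    have htT : t ∈ T := T.min'_mem hne
    obtain ⟨k, hk, r, h1, h2, h3⟩ := h t htT
    obtain ⟨B, b1, b2, b3, b4⟩ := ih t (T.erase t) (μ.drop r)
      (by rw [Finset.card_erase_of_mem htT, hT]; rfl)
      (fun x hx => hp x (List.mem_of_mem_drop hx)) (by
        intro i hi
        rw [Finset.mem_erase] at hi
        have hti : t < i := lt_of_le_of_ne (T.min'_le i hi.2) (Ne.symm hi.1)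
        obtain ⟨k', hk', r', h1', h2', h3'⟩ := h i hi.2
        have hkk : k < k' := by omega
        have hrr : r < r' := by
          by_contra hcon
          have hle : (μ.take r').sum ≤ (μ.take r).sum :=
            ((List.take_prefix_take_left (by omega)).sublist).sum_le_sum (by simp)
          rw [h3, h3'] at hle
          have := Nat.le_of_mul_le_mul_left hle hm
          omega
        refine ⟨k' - k, by omega, r' - r, by omega, by rw [List.length_drop]; omega, ?_⟩
        have e : μ.take r' = μ.take r ++ (μ.drop r).take (r' - r) := by
          rw [← List.take_add]; congr 1; omega
        rw [e, List.sum_append, h3] at h3'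
        rw [Nat.mul_sub]; omega)
    match B, b2 with
    | c :: B, b2 =>
      have hs : (μ.take r).sum / m = k := by rw [h3]; exact Nat.mul_div_cancel_left _ hm
      refine ⟨μ.take r :: c :: B, ⟨⟨?_, ?_⟩, b1⟩, by simpa using b2, ?_, ?_⟩
      · intro hh
        have := congrArg List.length hh
        simp at this
        rcases this with h | h
        · omega
        · subst h; simp at h2; omega
      · rw [h3]; exact dvd_mul_right _ _
      · rw [List.flatten_cons, b3, List.take_append_drop]
      · rw [cutsF, hs, ← hk, b4, Finset.insert_erase htT]

theorem ncard_perm (a : List ℕ) : {b : List ℕ | b.Perm a}.ncard = numComp a := by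
  have : {b : List ℕ | b.Perm a} = ((a.permutations.toFinset : Finset (List ℕ)) : Set (List ℕ)) := by
    ext b; simp
  rw [this, Set.ncard_coe_finset, List.card_toFinset]; rfl

theorem finite_perm (a : List ℕ) : {b : List ℕ | b.Perm a}.Finite := by
  have : {b : List ℕ | b.Perm a} = ((a.permutations.toFinset : Finset (List ℕ)) : Set (List ℕ)) := by
    ext b; simp
  rw [this]; exact Finset.finite_toSet _

theorem ncard_forall (A : List (List ℕ)) :
    {B : List (List ℕ) | List.Forall₂ List.Perm B A}.ncard = cAprod A := by
  induction A with
  | nil => simp [cAprod]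
  | cons a A ih =>
    have : {B : List (List ℕ) | List.Forall₂ List.Perm B (a :: A)} =
        (fun p : List ℕ × List (List ℕ) => p.1 :: p.2) ''
          ({b : List ℕ | b.Perm a} ×ˢ {B : List (List ℕ) | List.Forall₂ List.Perm B A}) := by
      ext B
      simp only [Set.mem_setOf_eq, List.forall₂_cons_right_iff, Set.mem_image, Set.mem_prod,
        Prod.exists]
      constructor
      · rintro ⟨b, u, h1, h2, rfl⟩; exact ⟨b, u, ⟨h1, h2⟩, rfl⟩
      · rintro ⟨b, u, ⟨h1, h2⟩, rfl⟩; exact ⟨b, u, h1, h2, rfl⟩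
    rw [this, Set.InjOn.ncard_image, Set.ncard_prod, ih, ncard_perm]
    · simp [cAprod]
    · rintro ⟨a, b⟩ _ ⟨c, d⟩ _ h
      simpa using h

def srt (l : List ℕ) : List ℕ := l.insertionSort (· ≥ ·)

theorem srt_perm (l : List ℕ) : (srt l).Perm l := List.perm_insertionSort _ l

theorem srt_eq {b a : List ℕ} (ha : a.Pairwise (· ≥ ·)) : srt b = a ↔ b.Perm a := by
  constructor
  · rintro rfl; exact (srt_perm b).symm
  · intro h
    exact List.Perm.eq_of_pairwise (le := (· ≥ ·)) (fun x y _ _ h1 h2 => le_antisymm h2 h1)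
      (List.pairwise_insertionSort _ b) ha ((srt_perm b).trans h)

theorem map_srt_eq {A : List (List ℕ)} (hA : ∀ a ∈ A, a.Pairwise (· ≥ ·)) (B : List (List ℕ)) :
    B.map srt = A ↔ List.Forall₂ List.Perm B A := by
  induction A generalizing B with
  | nil => simp
  | cons a A ih =>
    cases B with
    | nil => simp
    | cons b B =>
      simp only [List.map_cons, List.cons.injEq, List.forall₂_cons]
      rw [srt_eq (hA a (by simp)), ih (fun x hx => hA x (by simp [hx]))]

theorem forall2_good {m : ℕ} {A B : List (List ℕ)} (h : List.Forall₂ List.Perm B A)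
    (hg : GoodB m A) : GoodB m B := by
  induction h with
  | nil => trivial
  | cons h1 h2 ih =>
    cases h2 with
    | nil => trivial
    | cons h3 h4 =>
      refine ⟨⟨?_, ?_⟩, ih hg.2⟩
      · rintro rfl; exact hg.1.1 (List.nil_perm.1 h1)
      · rw [h1.sum_eq]; exact hg.1.2

theorem forall2_flatten {A B : List (List ℕ)} (h : List.Forall₂ List.Perm B A) :
    B.flatten.Perm A.flatten := by
  induction h with
  | nil => simp
  | cons h1 h2 ih => simpa using h1.append ih

theorem stmt6 {m : ℕ} (hm : 0 < m) {n : ℕ} (lam : List ℕ) (hlam : IsPartitionL lam)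
    (hn : lam.sum = n) (j : ℕ) (hj1 : 1 ≤ j) (hjb : j ≤ n / m) :
    ∑ T ∈ Finset.powersetCard j (Finset.Icc 1 (n / m)),
        Nat.card ↥(⋂ i ∈ T, {μ : List ℕ |
          List.Perm μ lam ∧ ∃ r, 1 ≤ r ∧ r ≤ lam.length ∧ (μ.take r).sum = m * i}) =
      ∑ᶠ A ∈ {A : List (List ℕ) | Wmem m lam A ∧ A.length = j + 1}, cAprod A := by
  classical
  let S : Set (List (List ℕ)) := {B | GoodB m B ∧ B.length = j + 1 ∧ B.flatten.Perm lam}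
  have hpos : ∀ B ∈ S, ∀ x ∈ B.flatten, 0 < x := fun B hB x hx => hlam.2 x (hB.2.2.mem_iff.1 hx)
  have hne : ∀ B ∈ S, B ≠ [] := by
    rintro B hB rfl
    have := hB.2.1
    simp at this
  have hmaps : ∀ B ∈ S, cutsF m 0 B ∈ Finset.powersetCard j (Finset.Icc 1 (n / m)) := by
    intro B hB
    rw [Finset.mem_powersetCard]
    constructor
    · intro i hi
      have h0 := cuts_gt hm B 0 hB.1 (hpos B hB) i hi
      obtain ⟨k, hk, r, h1, h2, h3⟩ := cuts_ps hm B 0 hB.1 (hpos B hB) i hi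
      rw [Finset.mem_Icc]
      refine ⟨h0, ?_⟩
      rw [Nat.le_div_iff_mul_le hm, mul_comm, ← hn, ← hB.2.2.sum_eq]
      have hle : (B.flatten.take r).sum ≤ B.flatten.sum :=
        (List.take_sublist _ _).sum_le_sum (by simp)
      rw [h3] at hle
      rw [hk, zero_add]; exact hle
    · have := cuts_card hm B 0 hB.1 (hne B hB) (hpos B hB)
      have := hB.2.1
      omega
  have hinj : ∀ B ∈ S, ∀ B' ∈ S, cutsF m 0 B = cutsF m 0 B' → B.flatten = B'.flatten → B = B' :=
    fun B hB B' hB' h1 h2 => cuts_inj hm B 0 B' hB.1 hB'.1 (hB.2.1.trans hB'.2.1.symm)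
      (hpos B hB) h2 h1
  have hSfin : S.Finite := by
    refine Set.Finite.of_injOn (f := fun B => (cutsF m 0 B, B.flatten))
      (t := (↑(Finset.powersetCard j (Finset.Icc 1 (n / m))) : Set (Finset ℕ)) ×ˢ
        {b : List ℕ | b.Perm lam}) ?_ ?_ ((Finset.finite_toSet _).prod (finite_perm lam))
    · intro B hB
      exact ⟨hmaps B hB, hB.2.2⟩
    · intro B hB B' hB' h
      simp only [Prod.mk.injEq] at h
      exact hinj B hB B' hB' h.1 h.2
  have hWS : {A : List (List ℕ) | Wmem m lam A ∧ A.length = j + 1} ⊆ S := by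
    rintro A ⟨⟨_, _, h3, h4⟩, h5⟩
    exact ⟨(goodB_iff m A).2 h3, h5, h4⟩
  have hWfin := hSfin.subset hWS
  trans hSfin.toFinset.card
  · rw [Finset.card_eq_sum_card_fiberwise (f := fun B => cutsF m 0 B)
      (t := Finset.powersetCard j (Finset.Icc 1 (n / m)))
      (fun B hB => hmaps B (by simpa using hB))]
    refine Finset.sum_congr rfl fun T hT => ?_
    rw [Finset.mem_powersetCard] at hT
    rw [Nat.card_coe_set_eq, ← Set.ncard_coe_finset]
    symm
    refine Set.ncard_congr (fun B _ => B.flatten) ?_ ?_ ?_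
    · intro B hB
      simp only [Finset.coe_filter, Set.Finite.mem_toFinset, Set.mem_setOf_eq] at hB
      obtain ⟨hB, rfl⟩ := hB
      simp only [Set.mem_iInter, Set.mem_setOf_eq]
      intro i hi
      obtain ⟨k, hk, r, h1, h2, h3⟩ := cuts_ps hm B 0 hB.1 (hpos B hB) i hi
      rw [zero_add] at hk
      subst hk
      exact ⟨hB.2.2, r, h1, by rw [← hB.2.2.length_eq]; exact h2, h3⟩
    · intro B B' hB hB' h
      simp only [Finset.coe_filter, Set.Finite.mem_toFinset, Set.mem_setOf_eq] at hB hB'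
      exact hinj B hB.1 B' hB'.1 (hB.2.trans hB'.2.symm) h
    · intro μ hμ
      simp only [Set.mem_iInter, Set.mem_setOf_eq] at hμ
      have hTne : T.Nonempty := by rw [← Finset.card_pos]; omega
      obtain ⟨i0, hi0⟩ := hTne
      have hperm := (hμ i0 hi0).1
      obtain ⟨B, b1, b2, b3, b4⟩ := cuts_surj hm j 0 T μ hT.2
        (fun x hx => hlam.2 x (hperm.mem_iff.1 hx)) (by
          intro i hi
          obtain ⟨_, r, h1, h2, h3⟩ := hμ i hi
          exact ⟨i, by simp, r, h1, by rw [hperm.length_eq]; exact h2, h3⟩)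
      refine ⟨B, ?_, b3⟩
      simp only [Finset.coe_filter, Set.Finite.mem_toFinset, Set.mem_setOf_eq]
      exact ⟨⟨b1, b2, by rw [b3]; exact hperm⟩, b4⟩
  · rw [finsum_mem_eq_finite_toFinset_sum _ hWfin]
    rw [Finset.card_eq_sum_card_fiberwise (f := fun B : List (List ℕ) => B.map srt)
      (t := hWfin.toFinset)]
    · refine Finset.sum_congr rfl fun A hA => ?_
      rw [Set.Finite.mem_toFinset] at hA
      have hAS := hWS hA
      have hAp : ∀ a ∈ A, a.Pairwise (· ≥ ·) := fun a ha => (hA.1.2.1 a ha).1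
      rw [← ncard_forall, ← Set.ncard_coe_finset]
      congr 1
      ext B
      simp only [Finset.coe_filter, Set.Finite.mem_toFinset, Set.mem_setOf_eq]
      rw [map_srt_eq hAp]
      refine ⟨fun h => h.2, fun h => ⟨⟨forall2_good h hAS.1, ?_, ?_⟩, h⟩⟩
      · rw [h.length_eq]; exact hAS.2.1
      · exact (forall2_flatten h).trans hAS.2.2
    · intro B hB
      rw [Finset.mem_coe, Set.Finite.mem_toFinset] at hB ⊢
      have hF : List.Forall₂ List.Perm (B.map srt) B := by
        rw [List.forall₂_map_left_iff]
        exact List.forall₂_same.2 fun x _ => srt_perm x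
      refine ⟨⟨?_, ?_, ?_, (forall2_flatten hF).trans hB.2.2⟩, by simpa using hB.2.1⟩
      · simpa using hne B hB
      · intro l hl
        obtain ⟨b, hb, rfl⟩ := List.mem_map.1 hl
        refine ⟨List.pairwise_insertionSort _ b, fun x hx => hpos B hB x ?_⟩
        exact List.mem_flatten.2 ⟨b, hb, (srt_perm b).mem_iff.1 hx⟩
      · exact (goodB_iff m _).1 (forall2_good hF hB.1)
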